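/- Suppose β ∈ (0,1) is such that for every injective map u : {1,…,N−1} → {0,…,N−1} and every v ∈ ℝ^N one has E(A_{u_{N−1}}^{−1}⋯A_{u_1}^{−1} v) ≤ ((N+2)β)^{2(N−1)} E(v). Let ω = ω_1ω_2… be an infinite word with letters in {0,…,N−1} satisfying liminf_{n→∞} C_N(ω,n)/log n > 1/|log β|. Then the series Σ_{n≥1} (N+2)^{−n} K_n converges, where K_n is the least K ≥ 0 such that E(A_{ω_n}^{−1}⋯A_{ω_1}^{−1} v) ≤ K² E(v) for all v ∈ ℝ^N. -/

import Mathlib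

open Matrix Filter

/-- The harmonic extension matrix `A_i` for `SG_N`. -/
noncomputable def harmA (N : ℕ) (i : Fin N) : Matrix (Fin N) (Fin N) ℝ :=
  Matrix.of fun j k =>
    if j = i then (if k = i then 1 else 0)
    else if k = i then 2 / (N + 2)
    else (1 + if j = k then 1 else 0) / (N + 2)

/-- The energy bilinear form `E(u,v) = ∑_{k<l} (u_k - u_l)(v_k - v_l)` on `ℝ^N`. -/
noncomputable def energy (N : ℕ) (u v : Fin N → ℝ) : ℝ :=
  ∑ k : Fin N, ∑ l : Fin N, if k < l then (u k - u l) * (v k - v l) else 0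

/-- Product `A_{w_m}⁻¹ ⋯ A_{w_1}⁻¹` of inverse harmonic extension matrices
along a finite word `w = w_1 ⋯ w_m` (zero-indexed as `w 0, …, w (m-1)`). -/
noncomputable def wordProdInv (N : ℕ) {m : ℕ} (w : Fin m → Fin N) :
    Matrix (Fin N) (Fin N) ℝ :=
  ((List.ofFn fun j => (harmA N (w j))⁻¹).reverse).prod

/-- Product `A_{ω_n}⁻¹ ⋯ A_{ω_1}⁻¹` along the first `n` letters of the infinite
word `ω = ω_1 ω_2 ⋯` (zero-indexed, so `ω_1 = ω 0`). -/
noncomputable def prefixProdInv (N : ℕ) (ω : ℕ → Fin N) (n : ℕ) :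
    Matrix (Fin N) (Fin N) ℝ :=
  wordProdInv N fun j : Fin n => ω j

open scoped Classical in
/-- Block counting function `C_N(ω,n)`: the number of positions `i` with
`i + (N-2) ≤ n` (one-indexed) at which the `N-1` letters `ω_i, …, ω_{i+N-2}`
are pairwise distinct.  Here `ω` is zero-indexed, so `ω_1 = ω 0`. -/
noncomputable def blockCount (N : ℕ) (ω : ℕ → Fin N) (n : ℕ) : ℕ :=
  ((Finset.range n).filter fun i =>
    i + (N - 2) < n ∧ Function.Injective fun j : Fin (N - 1) => ω (i + j)).card

/-!
With `x = v - v_i`, one has the identity `(N+2)² E(A_i v) = E(v) + (N+1) (∑ x_k)²`, so `A_i⁻¹`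
expands the energy by a factor at most `(N+2)²`. Hence `(N+2)^{-2n} E(A_{ω_n}⁻¹ ⋯ A_{ω_1}⁻¹ v)` is
nonincreasing in `n`, and it drops by a factor `β^{2L}` across every contracting block of length
`L`. At most `L` of the windows counted up to time `n` end after time `n - L`, so if a contracting
block ends at `n`, its factor `β^{2L}` pays `β²` for each of them: overlaps do no harm. Thus
`(N+2)^{-n} K_n ≤ β^{C(n)}`, which the hypothesis on `C(n) / log n` bounds by `n^{-s}` with `s > 1`.
-/

section Energy

variable {N : ℕ}

lemma two_mul_energy (u v : Fin N → ℝ) :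
    2 * energy N u v = ∑ k, ∑ l, (u k - u l) * (v k - v l) := by
  have energy_swap : energy N u v =
      ∑ k, ∑ l, if l < k then (u k - u l) * (v k - v l) else 0 := by
    rw [energy, Finset.sum_comm]
    refine Finset.sum_congr rfl fun k _ => Finset.sum_congr rfl fun l _ => ?_
    rw [← neg_sub (u k), ← neg_sub (v k), neg_mul_neg]
  rw [two_mul]
  nth_rewrite 2 [energy_swap]
  simp only [energy, ← Finset.sum_add_distrib]
  refine Finset.sum_congr rfl fun k _ => Finset.sum_congr rfl fun l _ => ?_
  rcases lt_trichotomy k l with h | h | h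
  · simp [h, h.not_gt]
  · simp [h]
  · simp [h, h.not_gt]

lemma energy_eq_mul_sum_sub (u v : Fin N → ℝ) :
    energy N u v = N * ∑ j, u j * v j - (∑ j, u j) * ∑ j, v j := by
  have expand (k l : Fin N) : (u k - u l) * (v k - v l)
      = u k * v k + u l * v l - u k * v l - u l * v k := by ring
  have h := two_mul_energy u v
  simp only [expand, Finset.sum_sub_distrib, Finset.sum_add_distrib, Finset.sum_const,
    Finset.card_univ, Fintype.card_fin, nsmul_eq_mul] at h
  simp only [← Finset.mul_sum, ← Finset.sum_mul] at h
  linarith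

lemma energy_mul_sub_mul_sub (a b c d : ℝ) (u v : Fin N → ℝ) :
    energy N (fun j => a * (u j - c)) (fun j => b * (v j - d)) = a * b * energy N u v := by
  simp only [energy, Finset.mul_sum, mul_ite, mul_zero]
  refine Finset.sum_congr rfl fun k _ => Finset.sum_congr rfl fun l _ => ?_
  split_ifs <;> ring

lemma energy_self_nonneg (v : Fin N → ℝ) : 0 ≤ energy N v v := by
  refine Finset.sum_nonneg fun k _ => Finset.sum_nonneg fun l _ => ?_
  split_ifs
  exacts [mul_self_nonneg _, le_rfl]

end Energy

section HarmonicExtension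

variable {N : ℕ} (i : Fin N) (v : Fin N → ℝ)

lemma mul_harmA_mulVec_sub (j : Fin N) :
    ((N : ℝ) + 2) * ((harmA N i *ᵥ v) j - v i) =
      v j - v i + if j = i then 0 else ∑ k, (v k - v i) := by
  rcases eq_or_ne j i with rfl | hj
  · simp [harmA, mulVec, dotProduct]
  · have hN : (N : ℝ) + 2 ≠ 0 := by positivity
    have entry (k : Fin N) : harmA N i j k * v k =
        (v k + (if k = i then v k else 0) + if k = j then v k else 0) / (N + 2) := by
      rcases eq_or_ne k i with rfl | hk
      · simp only [harmA, of_apply, hj, hj.symm, if_true, if_false]; ring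
      · rcases eq_or_ne k j with rfl | hkj
        · simp only [harmA, of_apply, hk, if_true, if_false]; ring
        · simp only [harmA, of_apply, hj, hk, hkj, hkj.symm, if_false]; ring
    have sum_entries : (harmA N i *ᵥ v) j = (∑ k, v k + v i + v j) / (N + 2) := by
      simp only [mulVec, dotProduct, entry, ← Finset.sum_div, Finset.sum_add_distrib,
        Finset.sum_ite_eq', Finset.mem_univ, if_true]
    rw [sum_entries, mul_sub, mul_div_cancel₀ _ hN, if_neg hj, Finset.sum_sub_distrib,
      Finset.sum_const, Finset.card_univ, Fintype.card_fin, nsmul_eq_mul]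
    ring

lemma sq_mul_energy_harmA_mulVec :
    ((N : ℝ) + 2) ^ 2 * energy N (harmA N i *ᵥ v) (harmA N i *ᵥ v) =
      energy N v v + (N + 1) * (∑ k, (v k - v i)) ^ 2 := by
  set s := ∑ k, (v k - v i) with hs
  have sum_shift : ∑ j, (v j - v i + if j = i then 0 else s) = N * s := by
    have (j : Fin N) : (v j - v i + if j = i then 0 else s)
        = v j - v i + s - if j = i then s else 0 := by split_ifs <;> ring
    simp [this, Finset.sum_add_distrib, Finset.sum_sub_distrib, ← hs]
  have sum_sq_shift : ∑ j, (v j - v i + if j = i then 0 else s) ^ 2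
      = ∑ j, (v j - v i) ^ 2 + (N + 1) * s ^ 2 := by
    have (j : Fin N) : (v j - v i + if j = i then 0 else s) ^ 2
        = (v j - v i) ^ 2 + 2 * s * (v j - v i) + s ^ 2 - if j = i then s ^ 2 else 0 := by
      split_ifs with h
      · rw [h]; ring
      · ring
    simp only [this, Finset.sum_add_distrib, Finset.sum_sub_distrib, ← Finset.mul_sum, ← hs,
      Finset.sum_const, Finset.card_univ, Fintype.card_fin, nsmul_eq_mul, Finset.sum_ite_eq',
      Finset.mem_univ, if_true]
    ring
  have energy_sub : energy N (fun j => v j - v i) (fun j => v j - v i) = energy N v v := by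
    simpa using energy_mul_sub_mul_sub 1 1 (v i) (v i) v v
  rw [pow_two, ← energy_mul_sub_mul_sub _ _ (v i) (v i), ← energy_sub, energy_eq_mul_sum_sub,
    energy_eq_mul_sum_sub]
  simp only [mul_harmA_mulVec_sub, ← pow_two, ← hs, sum_shift, sum_sq_shift]
  ring

lemma energy_le_sq_mul_energy_harmA_mulVec :
    energy N v v ≤ ((N : ℝ) + 2) ^ 2 * energy N (harmA N i *ᵥ v) (harmA N i *ᵥ v) := by
  rw [sq_mul_energy_harmA_mulVec]
  exact le_add_of_nonneg_right (by positivity)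

lemma isUnit_harmA : IsUnit (harmA N i) := by
  rw [← mulVec_injective_iff_isUnit, ← coe_mulVecLin, injective_iff_map_eq_zero]
  intro v hv
  rw [mulVecLin_apply] at hv
  have apply_i : v i = 0 := by
    have hN : (N : ℝ) + 2 ≠ 0 := by positivity
    simpa [hv, hN] using mul_harmA_mulVec_sub i v i
  have sum_eq_zero : ∑ k, (v k - v i) = 0 := by
    have h := sq_mul_energy_harmA_mulVec i v
    rw [hv, show energy N 0 0 = 0 by simp [energy], mul_zero] at h
    nlinarith [energy_self_nonneg v, sq_nonneg (∑ k, (v k - v i))]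
  funext j
  have apply_j := mul_harmA_mulVec_sub i v j
  rw [hv, sum_eq_zero, apply_i] at apply_j
  simpa using apply_j.symm

lemma energy_inv_harmA_mulVec_le :
    energy N ((harmA N i)⁻¹ *ᵥ v) ((harmA N i)⁻¹ *ᵥ v) ≤ ((N : ℝ) + 2) ^ 2 * energy N v v := by
  have h := energy_le_sq_mul_energy_harmA_mulVec i ((harmA N i)⁻¹ *ᵥ v)
  rwa [mulVec_mulVec, mul_nonsing_inv _ ((isUnit_iff_isUnit_det _).1 (isUnit_harmA i)),
    one_mulVec] at h

end HarmonicExtension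

section PrefixProducts

variable {N : ℕ} (ω : ℕ → Fin N)

lemma prefixProdInv_zero : prefixProdInv N ω 0 = 1 := by
  simp [prefixProdInv, wordProdInv]

lemma prefixProdInv_add (n m : ℕ) :
    prefixProdInv N ω (n + m) =
      wordProdInv N (fun j : Fin m => ω (n + j)) * prefixProdInv N ω n := by
  simp [prefixProdInv, wordProdInv, List.ofFn_add]

lemma prefixProdInv_succ (n : ℕ) :
    prefixProdInv N ω (n + 1) = (harmA N (ω n))⁻¹ * prefixProdInv N ω n := by
  simp [prefixProdInv_add, wordProdInv]

end PrefixProducts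

lemma le_pow_mul_pow_count_mul {R : Type*} [CommSemiring R] [PartialOrder R] [IsOrderedRing R]
    {a : ℕ → R} {M c : R} {L : ℕ} {p : ℕ → Prop} [DecidablePred p] (hM : 0 ≤ M) (hc0 : 0 ≤ c)
    (hc1 : c ≤ 1) (hL : 0 < L) (ha0 : 0 ≤ a 0) (ha : ∀ n, a (n + 1) ≤ M * a n)
    (hp : ∀ i, p i → a (i + L) ≤ (M * c) ^ L * a i) (n : ℕ) :
    a n ≤ M ^ n * c ^ Nat.count p (n + 1 - L) * a 0 := by
  induction n using Nat.strong_induction_on with | _ n ih =>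
  by_cases h : ∃ m, n = m + L ∧ p m
  · obtain ⟨m, rfl, hm⟩ := h
    have hcount : Nat.count p (m + L + 1 - L) ≤ L + Nat.count p (m + 1 - L) :=
      calc Nat.count p (m + L + 1 - L) ≤ Nat.count p (L + (m + 1 - L)) :=
            Nat.count_monotone p (by omega)
        _ ≤ L + Nat.count p (m + 1 - L) := by
            rw [Nat.count_add']
            exact Nat.add_le_add_right (Nat.count_le _) _
    calc a (m + L) ≤ (M * c) ^ L * a m := hp m hm
      _ ≤ (M * c) ^ L * (M ^ m * c ^ Nat.count p (m + 1 - L) * a 0) := by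
        gcongr
        exact ih m (by omega)
      _ = M ^ (m + L) * c ^ (L + Nat.count p (m + 1 - L)) * a 0 := by ring
      _ ≤ M ^ (m + L) * c ^ Nat.count p (m + L + 1 - L) * a 0 := by
        gcongr M ^ (m + L) * ?_ * a 0
        exact pow_le_pow_of_le_one hc0 hc1 hcount
  · rcases n with _ | n
    · simp [Nat.sub_eq_zero_of_le hL]
    have hcount : Nat.count p (n + 1 + 1 - L) = Nat.count p (n + 1 - L) := by
      rcases lt_or_ge (n + 1) L with hn | hn
      · rw [Nat.sub_eq_zero_of_le hn, Nat.sub_eq_zero_of_le hn.le]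
      · rw [Nat.succ_sub hn, Nat.count_succ, if_neg fun hpm => h ⟨_, by omega, hpm⟩, add_zero]
    calc a (n + 1) ≤ M * a n := ha n
      _ ≤ M * (M ^ n * c ^ Nat.count p (n + 1 - L) * a 0) := by
        gcongr
        exact ih n n.lt_succ_self
      _ = M ^ (n + 1) * c ^ Nat.count p (n + 1 + 1 - L) * a 0 := by rw [hcount]; ring

open scoped Classical in
/-- The number of positions in the first `n` letters of `ω` at which a block from the family `B` of
words of length `L` occurs. For `0 < L` there are `n + 1 - L` such positions, the truncated
subtraction giving `0` when `n < L`. -/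
noncomputable def blockOccurrences {α : Type*} {L : ℕ} (B : Set (Fin L → α)) (ω : ℕ → α) (n : ℕ) :
    ℕ :=
  Nat.count (fun i => (fun j : Fin L => ω (i + j)) ∈ B) (n + 1 - L)

lemma blockCount_eq_blockOccurrences {N : ℕ} (hN : 2 ≤ N) (ω : ℕ → Fin N) (n : ℕ) :
    blockCount N ω n =
      blockOccurrences {u : Fin (N - 1) → Fin N | Function.Injective u} ω n := by
  rw [blockCount, blockOccurrences, Nat.count_eq_card_filter_range]
  congr 1
  ext i
  simp only [Finset.mem_filter, Finset.mem_range, Set.mem_ofPred_eq, ← and_assoc]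
  exact and_congr_left' (by omega)

lemma energy_prefixProdInv_mulVec_le {N L : ℕ} {β : ℝ} (hL : 0 < L) (hβ0 : 0 ≤ β) (hβ1 : β ≤ 1)
    {B : Set (Fin L → Fin N)}
    (hB : ∀ u ∈ B, ∀ v : Fin N → ℝ, energy N (wordProdInv N u *ᵥ v) (wordProdInv N u *ᵥ v) ≤
      (((N : ℝ) + 2) * β) ^ (2 * L) * energy N v v)
    (ω : ℕ → Fin N) (n : ℕ) (v : Fin N → ℝ) :
    energy N (prefixProdInv N ω n *ᵥ v) (prefixProdInv N ω n *ᵥ v) ≤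
      (((N : ℝ) + 2) ^ n * β ^ blockOccurrences B ω n) ^ 2 * energy N v v := by
  set E : ℕ → ℝ := fun n => energy N (prefixProdInv N ω n *ᵥ v) (prefixProdInv N ω n *ᵥ v)
  have E_zero : E 0 = energy N v v := by simp [E, prefixProdInv_zero]
  have E_succ (n : ℕ) : E (n + 1) ≤ ((N : ℝ) + 2) ^ 2 * E n := by
    simpa only [E, prefixProdInv_succ, ← mulVec_mulVec] using energy_inv_harmA_mulVec_le _ _
  have E_block (i : ℕ) (hi : (fun j : Fin L => ω (i + j)) ∈ B) :
      E (i + L) ≤ (((N : ℝ) + 2) ^ 2 * β ^ 2) ^ L * E i := by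
    simpa only [E, prefixProdInv_add, ← mulVec_mulVec, ← mul_pow, ← pow_mul] using hB _ hi _
  classical
  calc E n ≤ (((N : ℝ) + 2) ^ 2) ^ n * (β ^ 2) ^ blockOccurrences B ω n * E 0 :=
        le_pow_mul_pow_count_mul (by positivity) (sq_nonneg β) (pow_le_one₀ hβ0 hβ1) hL
          (energy_self_nonneg _) E_succ E_block n
    _ = (((N : ℝ) + 2) ^ n * β ^ blockOccurrences B ω n) ^ 2 * energy N v v := by
        rw [E_zero, mul_pow, pow_right_comm, pow_right_comm β]

lemma summable_rpow_of_lt_liminf_div_log {β : ℝ} (hβ0 : 0 < β) (hβ1 : β < 1) {c : ℕ → ℝ}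
    (hc : ((1 / |Real.log β| : ℝ) : EReal) <
      liminf (fun n : ℕ => ((c n / Real.log n : ℝ) : EReal)) atTop) :
    Summable fun n => β ^ c n := by
  have log_neg : Real.log β < 0 := Real.log_neg hβ0 hβ1
  obtain ⟨p, hp_gt, hp_lt⟩ := EReal.lt_iff_exists_real_btwn.1 hc
  have one_lt : 1 < p * |Real.log β| :=
    (div_lt_iff₀ (abs_pos.2 log_neg.ne)).1 (EReal.coe_lt_coe_iff.1 hp_gt)
  have eventually_le : ∀ᶠ n : ℕ in atTop, β ^ c n ≤ (n : ℝ) ^ (-(p * |Real.log β|)) := by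
    filter_upwards [eventually_lt_of_lt_liminf hp_lt, eventually_ge_atTop 2] with n hn hn2
    have hn1 : (1 : ℝ) < n := by exact_mod_cast hn2
    have hcn : p * Real.log n < c n :=
      (lt_div_iff₀ (Real.log_pos hn1)).1 (EReal.coe_lt_coe_iff.1 hn)
    rw [Real.rpow_def_of_pos hβ0, Real.rpow_def_of_pos (by linarith), Real.exp_le_exp,
      abs_of_neg log_neg]
    linarith [mul_lt_mul_of_neg_left hcn log_neg]
  exact (Real.summable_nat_rpow.2 (neg_lt_neg one_lt)).of_norm_bounded_eventually_nat
    (eventually_le.mono fun n hn => by rwa [Real.norm_of_nonneg (by positivity)])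

theorem summable_energy_opnorm_series_general {N L : ℕ} {β : ℝ} (hL : 0 < L)
    (hβ0 : 0 < β) (hβ1 : β < 1) {B : Set (Fin L → Fin N)}
    (hB : ∀ u ∈ B, ∀ v : Fin N → ℝ, energy N (wordProdInv N u *ᵥ v) (wordProdInv N u *ᵥ v) ≤
      (((N : ℝ) + 2) * β) ^ (2 * L) * energy N v v)
    {ω : ℕ → Fin N}
    (hω : ((1 / |Real.log β| : ℝ) : EReal) <
      liminf (fun n : ℕ => ((blockOccurrences B ω n / Real.log n : ℝ) : EReal)) atTop)
    {K : ℕ → ℝ}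
    (hK : ∀ n, IsLeast {k : ℝ | 0 ≤ k ∧ ∀ v : Fin N → ℝ,
      energy N (prefixProdInv N ω n *ᵥ v) (prefixProdInv N ω n *ᵥ v) ≤
        k ^ 2 * energy N v v} (K n)) :
    Summable fun n => (((N : ℝ) + 2) ^ n)⁻¹ * K n := by
  have K_le (n : ℕ) : K n ≤ ((N : ℝ) + 2) ^ n * β ^ blockOccurrences B ω n :=
    (hK n).2 ⟨by positivity, energy_prefixProdInv_mulVec_le hL hβ0.le hβ1.le hB ω n⟩
  have summable_pow : Summable fun n => β ^ blockOccurrences B ω n := by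
    simpa only [Real.rpow_natCast] using summable_rpow_of_lt_liminf_div_log hβ0 hβ1 hω
  refine summable_pow.of_nonneg_of_le (fun n => mul_nonneg (by positivity) (hK n).1.1) fun n => ?_
  exact (inv_mul_le_iff₀ (by positivity)).2 (K_le n)

theorem summable_energy_opnorm_series (N : ℕ) (hN : 3 ≤ N) (β : ℝ)
    (hβ0 : 0 < β) (hβ1 : β < 1)
    (hblock : ∀ u : Fin (N - 1) → Fin N, Function.Injective u →
      ∀ v : Fin N → ℝ,
        energy N ((wordProdInv N u).mulVec v) ((wordProdInv N u).mulVec v) ≤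
          (((N : ℝ) + 2) * β) ^ (2 * (N - 1)) * energy N v v)
    (ω : ℕ → Fin N)
    (hω : (↑(1 / |Real.log β|) : EReal) <
      Filter.liminf (fun n : ℕ =>
        (((blockCount N ω n : ℝ) / Real.log n : ℝ) : EReal)) Filter.atTop)
    (K : ℕ → ℝ)
    (hK : ∀ n : ℕ, IsLeast {k : ℝ | 0 ≤ k ∧ ∀ v : Fin N → ℝ,
      energy N ((prefixProdInv N ω n).mulVec v) ((prefixProdInv N ω n).mulVec v) ≤
        k ^ 2 * energy N v v} (K n)) :
    Summable fun n : ℕ => (((N : ℝ) + 2) ^ n)⁻¹ * K n := by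
  simp only [blockCount_eq_blockOccurrences (show 2 ≤ N by omega)] at hω
  exact summable_energy_opnorm_series_general (by omega) hβ0 hβ1 hblock hω hK
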